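/- arXiv:2105.13660 — 2 statements merged into one kernel-verified Lean document; each statement's English description precedes it below -/
import Mathlib

section
/- Let f : A → B be a morphism of DGAs over ℚ (a degree-preserving unital algebra homomorphism commuting with the differentials) such that H³(A) = H³(B) = 0 and the induced map H²(f) : H²(A) → H²(B) is an isomorphism. Then the well-defined pentagonal Massey tensors 𝒫_A : D_A → H⁸(A) and 𝒫_B : D_B → H⁸(B) (which are independent of cochain choices since H³ vanishes) satisfy H⁸(f) ∘ 𝒫_A = 𝒫_B ∘ (D_A → D_B), where D_A → D_B is the restriction of H²(f) ⊗ Λ²(P²H²(f)). In particular, if f is a quasi-isomorphism, 𝒫 is a quasi-isomorphism invariant and hence an obstruction to formality. -/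
/-!
Common constructions: for a `ℚ`-vector space `V`, the symmetric powers
`P²V, P³V, P⁴V, P⁵V` (as `SqM V`, `CubM V`, `QuarM V`, `QuinM V`), built as iterated
quotients of tensor products, with the multiplication maps between them; the exterior
square `Λ²W` (as `AltM W`) with the wedge map; and the 5-linear map `⋆` (as `star5`).
-/

open TensorProduct

noncomputable section

variable (V W : Type) [AddCommGroup V] [Module ℚ V] [AddCommGroup W] [Module ℚ W]

/-- The relations defining the symmetric square `P²V` as a quotient of `V ⊗ V`. -/
def sqRel : Submodule ℚ (V ⊗[ℚ] V) :=
  Submodule.span ℚ {z | ∃ x y : V, z = x ⊗ₜ[ℚ] y - y ⊗ₜ[ℚ] x}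

/-- The symmetric square `P²V`. -/
abbrev SqM : Type := (V ⊗[ℚ] V) ⧸ sqRel V

/-- The product `V × V → P²V`, `(x, y) ↦ xy`. -/
def sqm : V →ₗ[ℚ] V →ₗ[ℚ] SqM V :=
  (TensorProduct.mk ℚ V V).compr₂ (sqRel V).mkQ

/-- The relations presenting the symmetric cube `P³V` as a quotient of `V ⊗ P²V`. -/
def cubRel : Submodule ℚ (V ⊗[ℚ] SqM V) :=
  Submodule.span ℚ {z | ∃ x y w : V, z = x ⊗ₜ[ℚ] sqm V y w - y ⊗ₜ[ℚ] sqm V x w}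

/-- The symmetric cube `P³V`. -/
abbrev CubM : Type := (V ⊗[ℚ] SqM V) ⧸ cubRel V

/-- The product `V × P²V → P³V`. -/
def mulC : V →ₗ[ℚ] SqM V →ₗ[ℚ] CubM V :=
  (TensorProduct.mk ℚ V (SqM V)).compr₂ (cubRel V).mkQ

/-- The relations presenting `P⁴V` as a quotient of `V ⊗ P³V`. -/
def quarRel : Submodule ℚ (V ⊗[ℚ] CubM V) :=
  Submodule.span ℚ {z | ∃ (x y : V) (u : SqM V), z = x ⊗ₜ[ℚ] mulC V y u - y ⊗ₜ[ℚ] mulC V x u}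

/-- The symmetric fourth power `P⁴V`. -/
abbrev QuarM : Type := (V ⊗[ℚ] CubM V) ⧸ quarRel V

/-- The product `V × P³V → P⁴V`. -/
def mulQ : V →ₗ[ℚ] CubM V →ₗ[ℚ] QuarM V :=
  (TensorProduct.mk ℚ V (CubM V)).compr₂ (quarRel V).mkQ

/-- The relations presenting `P⁵V` as a quotient of `V ⊗ P⁴V`. -/
def quinRel : Submodule ℚ (V ⊗[ℚ] QuarM V) :=
  Submodule.span ℚ {z | ∃ (x y : V) (c : CubM V), z = x ⊗ₜ[ℚ] mulQ V y c - y ⊗ₜ[ℚ] mulQ V x c}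

/-- The symmetric fifth power `P⁵V`. -/
abbrev QuinM : Type := (V ⊗[ℚ] QuarM V) ⧸ quinRel V

/-- The product `V × P⁴V → P⁵V`. -/
def mulQn : V →ₗ[ℚ] QuarM V →ₗ[ℚ] QuinM V :=
  (TensorProduct.mk ℚ V (QuarM V)).compr₂ (quinRel V).mkQ

/-- The relations defining the exterior square `Λ²W` as a quotient of `W ⊗ W`. -/
def altRel2 : Submodule ℚ (W ⊗[ℚ] W) :=
  Submodule.span ℚ {z | ∃ x : W, z = x ⊗ₜ[ℚ] x}

/-- The exterior square `Λ²W`. -/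
abbrev AltM : Type := (W ⊗[ℚ] W) ⧸ altRel2 W

/-- The wedge product `W × W → Λ²W`. -/
def wdg : W →ₗ[ℚ] W →ₗ[ℚ] AltM W :=
  (TensorProduct.mk ℚ W W).compr₂ (altRel2 W).mkQ

/-- The element `⋆(x₁,…,x₅) = Σ_{i ∈ ℤ/5} xᵢ ⊗ (x_{i+1}x_{i+2} ∧ x_{i+3}x_{i+4})`
of `V ⊗ Λ²(P²V)`. -/
def star5 (x₁ x₂ x₃ x₄ x₅ : V) : V ⊗[ℚ] AltM (SqM V) :=
    x₁ ⊗ₜ[ℚ] wdg (SqM V) (sqm V x₂ x₃) (sqm V x₄ x₅)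
  + x₂ ⊗ₜ[ℚ] wdg (SqM V) (sqm V x₃ x₄) (sqm V x₅ x₁)
  + x₃ ⊗ₜ[ℚ] wdg (SqM V) (sqm V x₄ x₅) (sqm V x₁ x₂)
  + x₄ ⊗ₜ[ℚ] wdg (SqM V) (sqm V x₅ x₁) (sqm V x₂ x₃)
  + x₅ ⊗ₜ[ℚ] wdg (SqM V) (sqm V x₁ x₂) (sqm V x₃ x₄)

/-- A differential graded algebra (DGA) over `ℚ`: an `ℕ`-graded, graded-commutative,
associative unital `ℚ`-algebra with a degree `+1` differential satisfying `d ∘ d = 0`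
and the graded Leibniz rule. -/
structure DGA where
  /-- The underlying type. -/
  carrier : Type
  [ringStr : Ring carrier]
  [algStr : Algebra ℚ carrier]
  /-- The grading `A = ⊕ᵢ Aⁱ`. -/
  grading : ℕ → Submodule ℚ carrier
  one_mem : (1 : carrier) ∈ grading 0
  mul_mem : ∀ {i j : ℕ} {a b : carrier}, a ∈ grading i → b ∈ grading j → a * b ∈ grading (i + j)
  /-- The grading really is a direct sum decomposition. -/
  internal : DirectSum.IsInternal grading
  /-- Graded commutativity. -/
  gcomm : ∀ {i j : ℕ} {a b : carrier}, a ∈ grading i → b ∈ grading j →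
    a * b = ((-1 : ℚ) ^ (i * j)) • (b * a)
  /-- The differential. -/
  d : carrier →ₗ[ℚ] carrier
  d_mem : ∀ {i : ℕ} {a : carrier}, a ∈ grading i → d a ∈ grading (i + 1)
  d_d : ∀ a : carrier, d (d a) = 0
  /-- The graded Leibniz rule. -/
  leibniz : ∀ {i : ℕ} {a : carrier} (b : carrier), a ∈ grading i →
    d (a * b) = d a * b + ((-1 : ℚ) ^ i) • (a * d b)

attribute [instance] DGA.ringStr DGA.algStr

namespace DGA

variable (A : DGA)

/-- The closed elements of degree `i`. -/
def Z (i : ℕ) : Submodule ℚ A.carrier := A.grading i ⊓ LinearMap.ker A.d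

/-- The exact elements of degree `i`, as a submodule of the closed ones. -/
def Bdry (i : ℕ) : Submodule ℚ (A.Z i) :=
  Submodule.comap (A.Z i).subtype (Submodule.map A.d (A.grading (i - 1)))

/-- Degree `i` cohomology of the DGA. -/
abbrev H (i : ℕ) : Type := A.Z i ⧸ A.Bdry i

/-- The projection from closed elements to cohomology classes. -/
def pr (i : ℕ) : A.Z i →ₗ[ℚ] A.H i := (A.Bdry i).mkQ

end DGA

/-! ### Helper lemmas -/

theorem aux_sq_ind {U : Type} [AddCommGroup U] [Module ℚ U] {C : Type} [AddCommGroup C] [Module ℚ C]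
    {g h : SqM U →ₗ[ℚ] C} (H : ∀ x y, g (sqm U x y) = h (sqm U x y)) : g = h := by
  apply Submodule.linearMap_qext
  apply TensorProduct.ext'
  intro x y
  exact H x y

theorem aux_sq_lift {U : Type} [AddCommGroup U] [Module ℚ U] {C : Type} [AddCommGroup C] [Module ℚ C]
    (b : U →ₗ[ℚ] U →ₗ[ℚ] C) (hb : ∀ x y, b x y = b y x) :
    ∃ L : SqM U →ₗ[ℚ] C, ∀ x y, L (sqm U x y) = b x y := by
  refine ⟨(sqRel U).liftQ (TensorProduct.lift b) ?_, fun x y => ?_⟩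
  · unfold sqRel
    rw [Submodule.span_le]
    rintro _ ⟨x, y, rfl⟩
    simp [hb x y]
  · simp [sqm]

theorem aux_cub_lift {U : Type} [AddCommGroup U] [Module ℚ U] {C : Type} [AddCommGroup C] [Module ℚ C]
    (b : U →ₗ[ℚ] SqM U →ₗ[ℚ] C) (hb : ∀ x y w, b x (sqm U y w) = b y (sqm U x w)) :
    ∃ L : CubM U →ₗ[ℚ] C, ∀ x u, L (mulC U x u) = b x u := by
  refine ⟨(cubRel U).liftQ (TensorProduct.lift b) ?_, fun x y => ?_⟩
  · unfold cubRel
    rw [Submodule.span_le]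
    rintro _ ⟨x, y, w, rfl⟩
    simp [hb x y w]
  · simp [mulC]

theorem aux_alt_ind {U W' : Type} [AddCommGroup U] [Module ℚ U] [AddCommGroup W'] [Module ℚ W']
    {C : Type} [AddCommGroup C] [Module ℚ C] (S : Submodule ℚ C)
    (g : (U ⊗[ℚ] AltM W') →ₗ[ℚ] C)
    (H : ∀ q x y, g (q ⊗ₜ[ℚ] wdg W' x y) ∈ S) (t) : g t ∈ S := by
  induction t using TensorProduct.induction_on with
  | zero => simp
  | add a b ha hb => rw [map_add]; exact S.add_mem ha hb
  | tmul q w =>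
    obtain ⟨w, rfl⟩ := (altRel2 W').mkQ_surjective w
    induction w using TensorProduct.induction_on with
    | zero => simp
    | add a b ha hb => rw [map_add, TensorProduct.tmul_add, map_add]; exact S.add_mem ha hb
    | tmul x y => exact H q x y

theorem aux_alt_ext {U W' : Type} [AddCommGroup U] [Module ℚ U] [AddCommGroup W'] [Module ℚ W']
    {C : Type} [AddCommGroup C] [Module ℚ C]
    (g h : (U ⊗[ℚ] AltM W') →ₗ[ℚ] C)
    (H : ∀ q x y, g (q ⊗ₜ[ℚ] wdg W' x y) = h (q ⊗ₜ[ℚ] wdg W' x y)) : g = h := by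
  refine LinearMap.ext fun t => ?_
  have := aux_alt_ind (⊥ : Submodule ℚ C) (g - h) (fun q x y => by simp [H]) t
  simpa [sub_eq_zero] using this

theorem aux_alt_map {W₁ W₂ : Type} [AddCommGroup W₁] [Module ℚ W₁] [AddCommGroup W₂] [Module ℚ W₂]
    (g : W₁ →ₗ[ℚ] W₂) : ∃ L : AltM W₁ →ₗ[ℚ] AltM W₂,
      ∀ x y, L (wdg W₁ x y) = wdg W₂ (g x) (g y) := by
  refine ⟨(altRel2 W₁).liftQ ((altRel2 W₂).mkQ ∘ₗ TensorProduct.map g g) ?_, fun x y => ?_⟩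
  · rw [show altRel2 W₁ = Submodule.span ℚ {z | ∃ x : W₁, z = x ⊗ₜ[ℚ] x} from rfl,
      Submodule.span_le]
    rintro _ ⟨x, rfl⟩
    simp only [SetLike.mem_coe, LinearMap.mem_ker, LinearMap.comp_apply, TensorProduct.map_tmul]
    rw [Submodule.mkQ_apply, Submodule.Quotient.mk_eq_zero]
    exact Submodule.subset_span ⟨_, rfl⟩
  · simp [wdg]

/-- Linear choice of primitives. -/
theorem aux_choice {U C : Type} [AddCommGroup U] [Module ℚ U] [AddCommGroup C] [Module ℚ C]
    (d : C →ₗ[ℚ] C) (G : Submodule ℚ C) (L : U →ₗ[ℚ] C) (h : ∀ u, L u ∈ Submodule.map d G) :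
    ∃ β : U →ₗ[ℚ] C, (∀ u, β u ∈ G) ∧ ∀ u, d (β u) = L u := by
  have hs : Function.Surjective (d.submoduleMap G) := LinearMap.submoduleMap_surjective d G
  obtain ⟨s, hs'⟩ := LinearMap.exists_rightInverse_of_surjective (d.submoduleMap G)
    (LinearMap.range_eq_top.2 hs)
  refine ⟨G.subtype ∘ₗ s ∘ₗ L.codRestrict _ h, fun u => (s _).2, fun u => ?_⟩
  have := congrArg Subtype.val (LinearMap.congr_fun hs' (L.codRestrict _ h u))
  simpa using this

theorem aux_extend {U C : Type} [AddCommGroup U] [Module ℚ U] [AddCommGroup C] [Module ℚ C]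
    (E : Submodule ℚ U) (G : Submodule ℚ C) (L : E →ₗ[ℚ] C) (h : ∀ u, L u ∈ G) :
    ∃ β : U →ₗ[ℚ] C, (∀ u, β u ∈ G) ∧ ∀ u : E, β u = L u := by
  obtain ⟨g, hg⟩ := LinearMap.exists_extend (L.codRestrict G h)
  refine ⟨G.subtype ∘ₗ g, fun u => (g u).2, fun u => ?_⟩
  have := congrArg Subtype.val (LinearMap.congr_fun hg u)
  simpa using this

section dga
variable (B : DGA)

theorem aux_comm2 {j : ℕ} {a b : B.carrier} (ha : a ∈ B.grading 2) (hb : b ∈ B.grading j) :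
    a * b = b * a := by
  have := B.gcomm ha hb
  rwa [pow_mul, neg_one_sq, one_pow, one_smul] at this

theorem aux_comm4 {j : ℕ} {a b : B.carrier} (ha : a ∈ B.grading 4) (hb : b ∈ B.grading j) :
    a * b = b * a := by
  have := B.gcomm ha hb
  rwa [pow_mul, show (-1 : ℚ) ^ 4 = 1 by norm_num, one_pow, one_smul] at this

theorem aux_anti33 {a b : B.carrier} (ha : a ∈ B.grading 3) (hb : b ∈ B.grading 3) :
    a * b = - (b * a) := by
  have := B.gcomm ha hb
  rw [this]; norm_num

theorem aux_leib1 {a : B.carrier} (b : B.carrier) (ha : a ∈ B.grading 1) :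
    B.d (a * b) = B.d a * b - a * B.d b := by
  rw [B.leibniz b ha]; norm_num [sub_eq_add_neg]

theorem aux_leib2 {a : B.carrier} (b : B.carrier) (ha : a ∈ B.grading 2) :
    B.d (a * b) = B.d a * b + a * B.d b := by
  rw [B.leibniz b ha]; norm_num

theorem aux_leib3 {a : B.carrier} (b : B.carrier) (ha : a ∈ B.grading 3) :
    B.d (a * b) = B.d a * b - a * B.d b := by
  rw [B.leibniz b ha]; norm_num [sub_eq_add_neg]

variable {U : Type} [AddCommGroup U] [Module ℚ U]

/-- Infinitesimal variation of the cochain choice. -/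
theorem aux_inf (α β : U →ₗ[ℚ] B.carrier) (γ δ sq : SqM U →ₗ[ℚ] B.carrier)
    (hα : ∀ x, α x ∈ B.grading 2) (hβ : ∀ x, β x ∈ B.grading 1)
    (hγ : ∀ x, γ x ∈ B.grading 3) (hδ : ∀ x, δ x ∈ B.grading 3)
    (hδ' : ∀ x y, δ (sqm U x y) = β x * α y + β y * α x)
    (hsq : ∀ x y, sq (sqm U x y) = α x * α y) :
    ∃ Θ : (CubM U ⊗[ℚ] SqM U) →ₗ[ℚ] B.carrier, ∀ q e e',
      B.d (γ e) = sq e → B.d (γ e') = sq e' →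
      (B.d (β q) * (γ e * γ e') + α q * (δ e * γ e' + γ e * δ e'))
        - Θ (mulC U q e ⊗ₜ[ℚ] e' - mulC U q e' ⊗ₜ[ℚ] e) ∈ Submodule.map B.d (B.grading 7) := by
  obtain ⟨θ, hθ⟩ := aux_cub_lift (U := U) (C := B.carrier)
    ((LinearMap.mul ℚ B.carrier).compl₁₂ α δ + (LinearMap.mul ℚ B.carrier).compl₁₂ β sq) (by
      intro x y w
      simp only [LinearMap.add_apply, LinearMap.compl₁₂_apply, LinearMap.mul_apply', hδ', hsq]
      have h1 : ∀ x y, α x * β y = β y * α x := fun x y => aux_comm2 B (hα x) (hβ y)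
      have h2 : α x * α y = α y * α x := aux_comm2 B (hα x) (hα y)
      rw [mul_add, mul_add, ← mul_assoc, ← mul_assoc, ← mul_assoc, ← mul_assoc, ← mul_assoc,
        ← mul_assoc, h1, h1, h1, h1, mul_assoc (β w), mul_assoc (β w), h2]
      abel)
  refine ⟨LinearMap.mul' ℚ B.carrier ∘ₗ TensorProduct.map θ γ, fun q e e' h h' => ?_⟩
  refine ⟨β q * (γ e * γ e'), B.mul_mem (hβ q) (B.mul_mem (hγ e) (hγ e')), ?_⟩
  rw [aux_leib1 B _ (hβ q), aux_leib3 B _ (hγ e), h, h']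
  simp only [map_sub, LinearMap.comp_apply, TensorProduct.map_tmul, LinearMap.mul'_apply, hθ,
    LinearMap.add_apply, LinearMap.compl₁₂_apply, LinearMap.mul_apply']
  have h1 : γ e * δ e' = - (δ e' * γ e) := aux_anti33 B (hγ e) (hδ e')
  have h2 : sq e' * γ e = γ e * sq e' := by
    refine aux_comm4 B ?_ (hγ e)
    rw [← h']; exact B.d_mem (hγ e')
  simp only [add_mul, mul_assoc, h1, h2, mul_add, mul_sub, mul_neg]
  abel

/-- Variation of `γ` by an exact term. -/
theorem aux_zeta (α : U →ₗ[ℚ] B.carrier) (γ ζ sq : SqM U →ₗ[ℚ] B.carrier)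
    (hα : ∀ x, α x ∈ B.grading 2) (hαd : ∀ x, B.d (α x) = 0)
    (hγ : ∀ x, γ x ∈ B.grading 3) (hζ : ∀ x, ζ x ∈ B.grading 2)
    (hsq : ∀ x y, sq (sqm U x y) = α x * α y) :
    ∃ Θ : (CubM U ⊗[ℚ] SqM U) →ₗ[ℚ] B.carrier, ∀ q e e',
      B.d (γ e) = sq e → B.d (γ e') = sq e' →
      (α q * ((γ e + B.d (ζ e)) * (γ e' + B.d (ζ e'))) - α q * (γ e * γ e'))
        - Θ (mulC U q e ⊗ₜ[ℚ] e' - mulC U q e' ⊗ₜ[ℚ] e) ∈ Submodule.map B.d (B.grading 7) := by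
  obtain ⟨θ, hθ⟩ := aux_cub_lift (U := U) (C := B.carrier)
    ((LinearMap.mul ℚ B.carrier).compl₁₂ α sq) (by
      intro x y w
      simp only [LinearMap.compl₁₂_apply, LinearMap.mul_apply', hsq]
      rw [← mul_assoc, ← mul_assoc, aux_comm2 B (hα x) (hα y)])
  refine ⟨LinearMap.mul' ℚ B.carrier ∘ₗ TensorProduct.map θ ζ, fun q e e' h h' => ?_⟩
  refine ⟨α q * (ζ e * γ e' + ζ e * B.d (ζ e') - γ e * ζ e'), B.mul_mem (hα q)
    (Submodule.sub_mem _ (Submodule.add_mem _ (B.mul_mem (hζ e) (hγ e'))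
      (B.mul_mem (hζ e) (B.d_mem (hζ e')))) (show _ ∈ B.grading (3 + 2) from B.mul_mem (hγ e) (hζ e'))), ?_⟩
  rw [aux_leib2 B _ (hα q), hαd, map_sub, map_add, aux_leib2 B _ (hζ e), aux_leib2 B _ (hζ e),
    aux_leib3 B _ (hγ e), h, h', B.d_d]
  simp only [map_sub, LinearMap.comp_apply, TensorProduct.map_tmul, LinearMap.mul'_apply, hθ,
    LinearMap.compl₁₂_apply, LinearMap.mul_apply']
  have h2 : ζ e * sq e' = sq e' * ζ e := by
    refine aux_comm2 B (hζ e) (j := 4) ?_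
    rw [← h']; exact B.d_mem (hγ e')
  simp only [add_mul, mul_assoc, h2, mul_add, mul_sub, mul_zero, zero_mul]
  abel

/-- Boole's rule, exact in degree at most five. -/
theorem aux_boole {R : Type} [Ring R] [Algebra ℚ R] (a b g₀ g₁ g₂ h₀ h₁ h₂ : R) (D : ℚ → R)
    (hD : ∀ s : ℚ, D s = b * ((g₀ + (s • g₁ + (s ^ 2) • g₂)) * (h₀ + (s • h₁ + (s ^ 2) • h₂)))
      + (a + s • b) * ((g₁ + (2 * s) • g₂) * (h₀ + (s • h₁ + (s ^ 2) • h₂))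
        + (g₀ + (s • g₁ + (s ^ 2) • g₂)) * (h₁ + (2 * s) • h₂))) :
    (a + b) * ((g₀ + (g₁ + g₂)) * (h₀ + (h₁ + h₂))) - a * (g₀ * h₀)
      = (7 / 90 : ℚ) • D 0 + (32 / 90 : ℚ) • D (1 / 4) + (12 / 90 : ℚ) • D (1 / 2)
        + (32 / 90 : ℚ) • D (3 / 4) + (7 / 90 : ℚ) • D 1 := by
  simp only [hD, mul_add, add_mul, smul_mul_assoc, mul_smul_comm]
  module

/-- Independence of the cochain choice, in a form with several sources. -/
theorem aux_main (E : Submodule ℚ (SqM U))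
    (α₁ α₂ β : U →ₗ[ℚ] B.carrier) (γ₁ γ₂ : E →ₗ[ℚ] B.carrier) (sq₁ sq₂ : SqM U →ₗ[ℚ] B.carrier)
    (h3 : ∀ z ∈ B.grading 3, B.d z = 0 → z ∈ Submodule.map B.d (B.grading 2))
    (hα₁ : ∀ x, α₁ x ∈ B.grading 2) (hα₁d : ∀ x, B.d (α₁ x) = 0)
    (hβ : ∀ x, β x ∈ B.grading 1) (hβd : ∀ x, B.d (β x) = α₂ x - α₁ x)
    (hγ₁ : ∀ x, γ₁ x ∈ B.grading 3) (hγ₂ : ∀ x, γ₂ x ∈ B.grading 3)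
    (hsq₁ : ∀ x y, sq₁ (sqm U x y) = α₁ x * α₁ y)
    (hsq₂ : ∀ x y, sq₂ (sqm U x y) = α₂ x * α₂ y)
    (hd₁ : ∀ e : E, B.d (γ₁ e) = sq₁ e) (hd₂ : ∀ e : E, B.d (γ₂ e) = sq₂ e) :
    ∃ Θ : (CubM U ⊗[ℚ] SqM U) →ₗ[ℚ] B.carrier, ∀ (q : U) (e e' : E),
      (α₁ q * (γ₁ e * γ₁ e') - α₂ q * (γ₂ e * γ₂ e'))
        - Θ (mulC U q e ⊗ₜ[ℚ] (e' : SqM U) - mulC U q e' ⊗ₜ[ℚ] (e : SqM U))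
          ∈ Submodule.map B.d (B.grading 7) := by
  obtain ⟨g, hg, hg'⟩ := aux_extend E (B.grading 3) γ₁ hγ₁
  have hdβ2 : ∀ x, B.d (β x) ∈ B.grading 2 := fun x => B.d_mem (hβ x)
  have hα₂ : ∀ x, α₂ x = α₁ x + B.d (β x) := fun x => by rw [hβd]; abel
  obtain ⟨η₁, hη₁⟩ := aux_sq_lift (U := U) (C := B.carrier)
    ((LinearMap.mul ℚ B.carrier).compl₁₂ β α₁ + ((LinearMap.mul ℚ B.carrier).compl₁₂ β α₁).flip)
    (fun x y => by simp [add_comm])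
  obtain ⟨η₂, hη₂⟩ := aux_sq_lift (U := U) (C := B.carrier)
    ((1 / 2 : ℚ) • ((LinearMap.mul ℚ B.carrier).compl₁₂ β (B.d ∘ₗ β)
      + ((LinearMap.mul ℚ B.carrier).compl₁₂ β (B.d ∘ₗ β)).flip))
    (fun x y => by simp [add_comm])
  simp only [LinearMap.add_apply, LinearMap.smul_apply, LinearMap.flip_apply,
    LinearMap.compl₁₂_apply, LinearMap.mul_apply', LinearMap.comp_apply] at hη₁ hη₂
  have hmem : ∀ (L : SqM U →ₗ[ℚ] B.carrier), (∀ x y, L (sqm U x y) ∈ B.grading 3) →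
      ∀ u, L u ∈ B.grading 3 := by
    intro L hL u
    have : (B.grading 3).mkQ ∘ₗ L = 0 := aux_sq_ind (fun x y => by
      simpa [Submodule.Quotient.mk_eq_zero] using hL x y)
    simpa [Submodule.Quotient.mk_eq_zero] using LinearMap.congr_fun this u
  have hη₁m : ∀ u, η₁ u ∈ B.grading 3 := hmem _ fun x y => by
    rw [hη₁]; exact Submodule.add_mem _ (B.mul_mem (hβ x) (hα₁ y)) (B.mul_mem (hβ y) (hα₁ x))
  have hη₂m : ∀ u, η₂ u ∈ B.grading 3 := hmem _ fun x y => by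
    rw [hη₂]
    exact Submodule.smul_mem _ _
      (Submodule.add_mem _ (B.mul_mem (hβ x) (hdβ2 y)) (B.mul_mem (hβ y) (hdβ2 x)))
  have hdη₁ : ∀ x y, B.d (η₁ (sqm U x y)) = B.d (β x) * α₁ y + B.d (β y) * α₁ x := by
    intro x y
    rw [hη₁, map_add, aux_leib1 B _ (hβ x), aux_leib1 B _ (hβ y), hα₁d, hα₁d]; simp
  have hdη₂ : ∀ x y, B.d (η₂ (sqm U x y)) = B.d (β x) * B.d (β y) := by
    intro x y
    rw [hη₂, map_smul, map_add, aux_leib1 B _ (hβ x), aux_leib1 B _ (hβ y), B.d_d, B.d_d,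
      aux_comm2 B (hdβ2 y) (hdβ2 x)]
    simp only [mul_zero, sub_zero]
    module
  -- the interpolating family
  have hinf : ∀ s : ℚ, _ := fun s : ℚ => aux_inf B (α₁ + s • (B.d ∘ₗ β)) β
    (g + (s • η₁ + (s ^ 2) • η₂)) (η₁ + (2 * s) • η₂)
    (sq₁ + B.d ∘ₗ (s • η₁ + (s ^ 2) • η₂))
    (fun x => Submodule.add_mem _ (hα₁ x) (Submodule.smul_mem _ _ (hdβ2 x))) hβ
    (fun x => Submodule.add_mem _ (hg x) (Submodule.add_mem _ (Submodule.smul_mem _ _ (hη₁m x))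
      (Submodule.smul_mem _ _ (hη₂m x))))
    (fun x => Submodule.add_mem _ (hη₁m x) (Submodule.smul_mem _ _ (hη₂m x)))
    (fun x y => by
      simp only [LinearMap.add_apply, LinearMap.smul_apply, LinearMap.comp_apply, hη₁, hη₂,
        mul_add, mul_smul_comm]
      module)
    (fun x y => by
      simp only [LinearMap.add_apply, LinearMap.smul_apply, LinearMap.comp_apply, map_add,
        map_smul, hdη₁, hdη₂, hsq₁, mul_add, add_mul, mul_smul_comm, smul_mul_assoc,
        aux_comm2 B (hdβ2 y) (hα₁ x)]
      module)
  choose Θ hΘ using hinf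
  -- the correction by an exact term
  have hsq : ∀ u, sq₂ u = sq₁ u + B.d ((η₁ + η₂) u) := by
    intro u
    have : sq₂ = sq₁ + B.d ∘ₗ (η₁ + η₂) := aux_sq_ind (fun x y => by
      simp only [LinearMap.add_apply, LinearMap.comp_apply, map_add, hdη₁, hdη₂, hsq₁, hsq₂, hα₂,
        mul_add, add_mul, aux_comm2 B (hdβ2 y) (hα₁ x)]
      abel)
    rw [this]; rfl
  obtain ⟨ζ₀, hζ₀, hζ₀d⟩ := aux_choice B.d (B.grading 2)
    (γ₂ - γ₁ - (η₁ + η₂) ∘ₗ E.subtype) (fun e => by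
      apply h3
      · exact Submodule.sub_mem _ (Submodule.sub_mem _ (hγ₂ e) (hγ₁ e))
          (Submodule.add_mem _ (hη₁m _) (hη₂m _))
      · simp only [LinearMap.sub_apply, LinearMap.comp_apply, map_sub, hd₁, hd₂, hsq,
          Submodule.subtype_apply]
        abel)
  obtain ⟨ζ, hζ, hζ'⟩ := aux_extend E (B.grading 2) ζ₀ hζ₀
  obtain ⟨Θ', hΘ'⟩ := aux_zeta B α₂ (g + (η₁ + η₂)) ζ sq₂
    (fun x => by rw [hα₂]; exact Submodule.add_mem _ (hα₁ x) (hdβ2 x))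
    (fun x => by rw [hα₂, map_add, hα₁d, B.d_d, add_zero])
    (fun x => Submodule.add_mem _ (hg x) (Submodule.add_mem _ (hη₁m x) (hη₂m x))) hζ hsq₂
  refine ⟨-(Θ' + ((7 / 90 : ℚ) • Θ 0 + (32 / 90 : ℚ) • Θ (1 / 4) + (12 / 90 : ℚ) • Θ (1 / 2)
        + (32 / 90 : ℚ) • Θ (3 / 4) + (7 / 90 : ℚ) • Θ 1)), fun q e e' => ?_⟩
  have k1 : ∀ s : ℚ, _ := fun s => hΘ s q e e' (by simp [hg', hd₁]) (by simp [hg', hd₁])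
  have k2 := hΘ' q e e' (by simp [hg', hd₁, hsq]) (by simp [hg', hd₁, hsq])
  have hγe : ∀ e : E, (g + (η₁ + η₂)) (e : SqM U) + B.d (ζ e) = γ₂ e := by
    intro e
    rw [hζ', hζ₀d]
    simp [hg']
  rw [hγe, hγe] at k2
  set X := mulC U q e ⊗ₜ[ℚ] (e' : SqM U) - mulC U q e' ⊗ₜ[ℚ] (e : SqM U) with hX
  have kb := aux_boole (α₁ q) (B.d (β q)) (g e) (η₁ e) (η₂ e) (g e') (η₁ e') (η₂ e') _
    (fun s => rfl)
  simp only [LinearMap.add_apply, LinearMap.smul_apply, LinearMap.comp_apply] at k1 k2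
  rw [← hα₂, hg', hg'] at kb
  rw [hg', hg'] at k2
  simp only [hg'] at k1
  have := Submodule.neg_mem _ (Submodule.add_mem _ k2
    (Submodule.add_mem _ (Submodule.add_mem _ (Submodule.add_mem _ (Submodule.add_mem _
      (Submodule.smul_mem _ (7 / 90 : ℚ) (k1 0)) (Submodule.smul_mem _ (32 / 90 : ℚ) (k1 (1 / 4))))
      (Submodule.smul_mem _ (12 / 90 : ℚ) (k1 (1 / 2))))
      (Submodule.smul_mem _ (32 / 90 : ℚ) (k1 (3 / 4)))) (Submodule.smul_mem _ (7 / 90 : ℚ) (k1 1))))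
  convert this using 1
  simp only [smul_sub]
  have e1 : ∀ (p p' r t a1 a2 a3 a4 a5 b1 b2 b3 b4 b5 y : B.carrier), p' - p = a1 + a2 + a3 + a4 + a5 →
      p - r + (y + (b1 + b2 + b3 + b4 + b5)) = -(r - p' - y + (a1 - b1 + (a2 - b2) + (a3 - b3)
        + (a4 - b4) + (a5 - b5))) := by
    intro p p' r t a1 a2 a3 a4 a5 b1 b2 b3 b4 b5 y h
    have : p' = a1 + a2 + a3 + a4 + a5 + p := by rw [← h]; abel
    rw [this]; abel
  simp only [LinearMap.neg_apply, LinearMap.add_apply, LinearMap.smul_apply, sub_neg_eq_add]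
  refine e1 _ _ _ 0 _ _ _ _ _ _ _ _ _ _ _ ?_
  rw [kb]

end dga

set_option maxHeartbeats 2000000

/-- **Remark 2.9.** Let `f : A → B` be a morphism of DGAs over `ℚ` with
`H³(A) = H³(B) = 0` and with `H²(f)` an isomorphism. Then the (choice-independent)
pentagonal Massey tensors satisfy `H⁸(f) ∘ 𝒫_A = 𝒫_B ∘ (D_A → D_B)`: for all cochain
choices on `A` and on `B` and every `t ∈ D_A`, the element `f(α_Aγ_A²(t))` and the value
of `α_Bγ_B²` on the image of `t` under `H²(f) ⊗ Λ²(P²H²(f))` differ by an exact element. -/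
theorem P_quasi_iso_invariant (A B : DGA)
    (h3A : ∀ x : A.H 3, x = 0) (h3B : ∀ x : B.H 3, x = 0)
    (f : A.carrier →ₐ[ℚ] B.carrier)
    (hfd : ∀ a : A.carrier, f (A.d a) = B.d (f a))
    (hfgr : ∀ (i : ℕ) (a : A.carrier), a ∈ A.grading i → f a ∈ B.grading i)
    (f2 : A.H 2 →ₗ[ℚ] B.H 2)
    (hf2 : ∀ (x : A.Z 2) (y : B.Z 2),
      (y : B.carrier) = f (x : A.carrier) → f2 (A.pr 2 x) = B.pr 2 y)
    (hf2bij : Function.Bijective f2)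
    (cupA : SqM (A.H 2) →ₗ[ℚ] A.H 4)
    (hcupA : ∀ (x y : A.Z 2) (w : A.Z 4),
      (w : A.carrier) = (x : A.carrier) * (y : A.carrier) →
      cupA (sqm (A.H 2) (A.pr 2 x) (A.pr 2 y)) = A.pr 4 w)
    (cupB : SqM (B.H 2) →ₗ[ℚ] B.H 4)
    (hcupB : ∀ (x y : B.Z 2) (w : B.Z 4),
      (w : B.carrier) = (x : B.carrier) * (y : B.carrier) →
      cupB (sqm (B.H 2) (B.pr 2 x) (B.pr 2 y)) = B.pr 4 w)
    (mA : (A.H 2 ⊗[ℚ] AltM (SqM (A.H 2))) →ₗ[ℚ] (CubM (A.H 2) ⊗[ℚ] SqM (A.H 2)))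
    (hmA : ∀ (q : A.H 2) (u v : SqM (A.H 2)),
      mA (q ⊗ₜ[ℚ] wdg (SqM (A.H 2)) u v)
        = mulC (A.H 2) q u ⊗ₜ[ℚ] v - mulC (A.H 2) q v ⊗ₜ[ℚ] u)
    (ιA : (A.H 2 ⊗[ℚ] AltM ↥(LinearMap.ker cupA)) →ₗ[ℚ] (A.H 2 ⊗[ℚ] AltM (SqM (A.H 2))))
    (hιA : ∀ (q : A.H 2) (e e' : ↥(LinearMap.ker cupA)),
      ιA (q ⊗ₜ[ℚ] wdg ↥(LinearMap.ker cupA) e e')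
        = q ⊗ₜ[ℚ] wdg (SqM (A.H 2)) (e : SqM (A.H 2)) (e' : SqM (A.H 2)))
    (ιB : (B.H 2 ⊗[ℚ] AltM ↥(LinearMap.ker cupB)) →ₗ[ℚ] (B.H 2 ⊗[ℚ] AltM (SqM (B.H 2))))
    (hιB : ∀ (q : B.H 2) (e e' : ↥(LinearMap.ker cupB)),
      ιB (q ⊗ₜ[ℚ] wdg ↥(LinearMap.ker cupB) e e')
        = q ⊗ₜ[ℚ] wdg (SqM (B.H 2)) (e : SqM (B.H 2)) (e' : SqM (B.H 2)))
    (F : (A.H 2 ⊗[ℚ] AltM (SqM (A.H 2))) →ₗ[ℚ] (B.H 2 ⊗[ℚ] AltM (SqM (B.H 2))))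
    (hF : ∀ q x y z w : A.H 2,
      F (q ⊗ₜ[ℚ] wdg (SqM (A.H 2)) (sqm (A.H 2) x y) (sqm (A.H 2) z w))
        = f2 q ⊗ₜ[ℚ] wdg (SqM (B.H 2)) (sqm (B.H 2) (f2 x) (f2 y))
            (sqm (B.H 2) (f2 z) (f2 w)))
    (αA : A.H 2 →ₗ[ℚ] A.Z 2) (hαA : ∀ h, A.pr 2 (αA h) = h)
    (αsqA : SqM (A.H 2) →ₗ[ℚ] A.Z 4)
    (hαsqA : ∀ (x y : A.H 2) (w : A.Z 4),
      (w : A.carrier) = (αA x : A.carrier) * (αA y : A.carrier) →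
      αsqA (sqm (A.H 2) x y) = w)
    (γA : ↥(LinearMap.ker cupA) →ₗ[ℚ] A.carrier)
    (hγAmem : ∀ e, γA e ∈ A.grading 3)
    (hγAd : ∀ e : ↥(LinearMap.ker cupA), A.d (γA e) = (αsqA (e : SqM (A.H 2)) : A.carrier))
    (ΦA : (A.H 2 ⊗[ℚ] AltM ↥(LinearMap.ker cupA)) →ₗ[ℚ] A.carrier)
    (hΦA : ∀ (q : A.H 2) (e e' : ↥(LinearMap.ker cupA)),
      ΦA (q ⊗ₜ[ℚ] wdg ↥(LinearMap.ker cupA) e e') = (αA q : A.carrier) * (γA e * γA e'))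
    (αB : B.H 2 →ₗ[ℚ] B.Z 2) (hαB : ∀ h, B.pr 2 (αB h) = h)
    (αsqB : SqM (B.H 2) →ₗ[ℚ] B.Z 4)
    (hαsqB : ∀ (x y : B.H 2) (w : B.Z 4),
      (w : B.carrier) = (αB x : B.carrier) * (αB y : B.carrier) →
      αsqB (sqm (B.H 2) x y) = w)
    (γB : ↥(LinearMap.ker cupB) →ₗ[ℚ] B.carrier)
    (hγBmem : ∀ e, γB e ∈ B.grading 3)
    (hγBd : ∀ e : ↥(LinearMap.ker cupB), B.d (γB e) = (αsqB (e : SqM (B.H 2)) : B.carrier))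
    (ΦB : (B.H 2 ⊗[ℚ] AltM ↥(LinearMap.ker cupB)) →ₗ[ℚ] B.carrier)
    (hΦB : ∀ (q : B.H 2) (e e' : ↥(LinearMap.ker cupB)),
      ΦB (q ⊗ₜ[ℚ] wdg ↥(LinearMap.ker cupB) e e')
        = (αB q : B.carrier) * (γB e * γB e')) :
    ∀ (tA : A.H 2 ⊗[ℚ] AltM ↥(LinearMap.ker cupA))
      (tB : B.H 2 ⊗[ℚ] AltM ↥(LinearMap.ker cupB)),
      mA (ιA tA) = 0 → ιB tB = F (ιA tA) →
      f (ΦA tA) - ΦB tB ∈ Submodule.map B.d (B.grading 7) := by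
  intro tA tB hmt hιt
  -- general facts on cocycles
  have hZ : ∀ (C : DGA) (i : ℕ) (z : C.Z i), (z : C.carrier) ∈ C.grading i :=
    fun C i z => z.2.1
  have hZd : ∀ (C : DGA) (i : ℕ) (z : C.Z i), C.d (z : C.carrier) = 0 :=
    fun C i z => LinearMap.mem_ker.1 z.2.2
  have hpr0 : ∀ (i : ℕ) (z : B.Z i), B.pr i z = 0 ↔
      (z : B.carrier) ∈ Submodule.map B.d (B.grading (i - 1)) := by
    intro i z
    rw [DGA.pr, Submodule.mkQ_apply, Submodule.Quotient.mk_eq_zero]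
    rfl
  have hfZ : ∀ (i : ℕ) (z : A.Z i), f (z : A.carrier) ∈ B.Z i := fun i z =>
    ⟨hfgr i _ (hZ A i z), LinearMap.mem_ker.2 (by rw [← hfd, hZd, map_zero])⟩
  have hmulZ : ∀ (C : DGA) (x y : C.Z 2), (x : C.carrier) * (y : C.carrier) ∈ C.Z 4 := by
    intro C x y
    refine ⟨C.mul_mem (hZ C 2 x) (hZ C 2 y), LinearMap.mem_ker.2 ?_⟩
    rw [aux_leib2 C _ (hZ C 2 x), hZd, hZd]; simp
  have hsqA' : ∀ x y, (αsqA (sqm (A.H 2) x y) : A.carrier) = αA x * αA y := fun x y => by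
    rw [hαsqA x y ⟨_, hmulZ A (αA x) (αA y)⟩ rfl]
  have hsqB' : ∀ x y, (αsqB (sqm (B.H 2) x y) : B.carrier) = αB x * αB y := fun x y => by
    rw [hαsqB x y ⟨_, hmulZ B (αB x) (αB y)⟩ rfl]
  -- the induced map on symmetric squares
  obtain ⟨P2, hP2⟩ := aux_sq_lift (U := A.H 2) (C := SqM (B.H 2))
    ((sqm (B.H 2)).compl₁₂ f2 f2) (fun x y => by
      simp only [LinearMap.compl₁₂_apply, sqm, LinearMap.compr₂_apply, TensorProduct.mk_apply,
        Submodule.mkQ_apply]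
      rw [Submodule.Quotient.eq]
      exact Submodule.subset_span ⟨_, _, rfl⟩)
  simp only [LinearMap.compl₁₂_apply] at hP2
  let fZ4 : A.Z 4 →ₗ[ℚ] B.Z 4 :=
    (f.toLinearMap ∘ₗ (A.Z 4).subtype).codRestrict (B.Z 4) (fun z => hfZ 4 z)
  have hcup : cupB ∘ₗ P2 = B.pr 4 ∘ₗ fZ4 ∘ₗ αsqA := aux_sq_ind (fun x y => by
    have hx := hf2 (αA x) ⟨_, hfZ 2 (αA x)⟩ rfl
    have hy := hf2 (αA y) ⟨_, hfZ 2 (αA y)⟩ rfl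
    rw [hαA] at hx hy
    simp only [LinearMap.comp_apply, hP2]
    rw [hx, hy]
    apply hcupB
    show f (αsqA (sqm (A.H 2) x y) : A.carrier) = _
    rw [hsqA', map_mul])
  have hE : ∀ e : LinearMap.ker cupA, P2 (e : SqM (A.H 2)) ∈ LinearMap.ker cupB := by
    intro e
    rw [LinearMap.mem_ker]
    have := LinearMap.congr_fun hcup (e : SqM (A.H 2))
    simp only [LinearMap.comp_apply] at this
    rw [this, hpr0]
    refine ⟨f (γA e), hfgr 3 _ (hγAmem e), ?_⟩
    rw [← hfd, hγAd]; rfl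
  let PE : LinearMap.ker cupA →ₗ[ℚ] LinearMap.ker cupB :=
    (P2 ∘ₗ (LinearMap.ker cupA).subtype).codRestrict _ hE
  obtain ⟨LE, hLE⟩ := aux_alt_map PE
  obtain ⟨LP, hLP⟩ := aux_alt_map P2
  have hF' : F = TensorProduct.map f2 LP := by
    refine aux_alt_ext _ _ fun q x y => ?_
    rw [TensorProduct.map_tmul, hLP]
    have h1 : ∀ y z, F ∘ₗ (TensorProduct.mk ℚ _ _ q) ∘ₗ (wdg (SqM (A.H 2))).flip (sqm _ y z) =
        (TensorProduct.mk ℚ _ _ (f2 q)) ∘ₗ (wdg (SqM (B.H 2))).flip (P2 (sqm _ y z)) ∘ₗ P2 := by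
      intro y z
      refine aux_sq_ind fun x w => ?_
      simp only [LinearMap.comp_apply, LinearMap.flip_apply, TensorProduct.mk_apply, hP2, hF]
    have h2 : F ∘ₗ (TensorProduct.mk ℚ _ _ q) ∘ₗ (wdg (SqM (A.H 2))) x =
        (TensorProduct.mk ℚ _ _ (f2 q)) ∘ₗ (wdg (SqM (B.H 2))) (P2 x) ∘ₗ P2 := by
      refine aux_sq_ind fun y z => ?_
      exact LinearMap.congr_fun (h1 y z) x
    exact LinearMap.congr_fun h2 y
  have hcomm : ιB ∘ₗ TensorProduct.map f2 LE = F ∘ₗ ιA := by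
    refine aux_alt_ext _ _ fun q x y => ?_
    simp only [LinearMap.comp_apply, TensorProduct.map_tmul, hLE, hιB, hιA, hF', hLP]
    rfl
  -- `ιB` is injective
  obtain ⟨r, hr⟩ := LinearMap.exists_leftInverse_of_injective (LinearMap.ker cupB).subtype
    (LinearMap.ker_eq_bot.2 (Submodule.subtype_injective _))
  obtain ⟨Lr, hLr⟩ := aux_alt_map r
  have hinv : TensorProduct.map LinearMap.id Lr ∘ₗ ιB = LinearMap.id := by
    refine aux_alt_ext _ _ fun q x y => ?_
    have hrx : ∀ x : LinearMap.ker cupB, r (x : SqM (B.H 2)) = x := fun x => LinearMap.congr_fun hr x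
    simp only [LinearMap.comp_apply, hιB, TensorProduct.map_tmul, hLr, hrx, LinearMap.id_apply]
  have htB : tB = TensorProduct.map f2 LE tA := by
    have h1 : ιB tB = ιB (TensorProduct.map f2 LE tA) := by
      rw [hιt]; exact (LinearMap.congr_fun hcomm tA).symm
    have h2 := congrArg (TensorProduct.map LinearMap.id Lr) h1
    have h3 : ∀ t, TensorProduct.map LinearMap.id Lr (ιB t) = t := LinearMap.congr_fun hinv
    rwa [h3, h3] at h2
  -- comparison of the two cochain choices
  let α₁ : A.H 2 →ₗ[ℚ] B.carrier := f.toLinearMap ∘ₗ (A.Z 2).subtype ∘ₗ αA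
  let α₂ : A.H 2 →ₗ[ℚ] B.carrier := (B.Z 2).subtype ∘ₗ αB ∘ₗ f2
  obtain ⟨β, hβ, hβd⟩ := aux_choice B.d (B.grading 1) (α₂ - α₁) (fun x => by
    have hx := hf2 (αA x) ⟨_, hfZ 2 (αA x)⟩ rfl
    rw [hαA, ← hαB (f2 x), ← sub_eq_zero, ← map_sub, hpr0] at hx
    exact hx)
  obtain ⟨Θ, hΘ⟩ := aux_main B (LinearMap.ker cupA) α₁ α₂ β (f.toLinearMap ∘ₗ γA) (γB ∘ₗ PE)
    (f.toLinearMap ∘ₗ (A.Z 4).subtype ∘ₗ αsqA) ((B.Z 4).subtype ∘ₗ αsqB ∘ₗ P2)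
    (fun z hz hdz => (hpr0 3 ⟨z, hz, LinearMap.mem_ker.2 hdz⟩).1 (h3B _))
    (fun x => hfgr 2 _ (hZ A 2 _))
    (fun x => by show B.d (f (αA x : A.carrier)) = 0; rw [← hfd, hZd, map_zero])
    hβ hβd
    (fun e => hfgr 3 _ (hγAmem e)) (fun e => hγBmem _)
    (fun x y => by
      show f (αsqA (sqm (A.H 2) x y) : A.carrier) = f (αA x : A.carrier) * f (αA y : A.carrier)
      rw [hsqA', map_mul])
    (fun x y => by
      show (αsqB (P2 (sqm (A.H 2) x y)) : B.carrier) = _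
      rw [hP2, hsqB']; rfl)
    (fun e => by show B.d (f _) = f _; rw [← hfd, hγAd]; rfl)
    (fun e => hγBd _)
  have key := aux_alt_ind (Submodule.map B.d (B.grading 7))
    (f.toLinearMap ∘ₗ ΦA - ΦB ∘ₗ TensorProduct.map f2 LE - Θ ∘ₗ mA ∘ₗ ιA) (fun q e e' => by
      have := hΘ q e e'
      simp only [LinearMap.sub_apply, LinearMap.comp_apply, hιA, hmA, TensorProduct.map_tmul, hLE,
        hΦA, hΦB, AlgHom.toLinearMap_apply, map_mul]
      exact this) tA
  simp only [LinearMap.sub_apply, LinearMap.comp_apply, hmt, map_zero, sub_zero] at key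
  rw [htB]
  exact key

end
end

section
/- Let A be a DGA over ℚ with a cochain choice (α, γ). Let x₁, x₂, x₃, x₄, x₅ ∈ H² satisfy x_i x_{i+1} = 0 in H⁴ for all i ∈ ℤ/5 (indices mod 5), so that each product x_i x_{i+1} ∈ P²H² lies in E. Write α_i = α(x_i) ∈ Z² and γ_{i,i+1} = γ(x_i x_{i+1}) ∈ A³, so dγ_{i,i+1} = α_i α_{i+1}. Suppose σ₁, σ₂ ∈ A⁴ satisfy dσ₁ = α₁γ₂₃ − γ₁₂α₃ and dσ₂ = α₂γ₃₄ − γ₂₃α₄. Then the element c = α₁σ₂ − γ₁₂γ₃₄ + σ₁α₄ ∈ A⁶ is closed, and in H⁸ one has [c · α₅] = −[ Σ_{i ∈ ℤ/5} α_i γ_{i+1,i+2} γ_{i+3,i+4} ]; the class on the right equals the evaluation of the map induced by αγ² on ⋆(x₁, x₂, x₃, x₄, x₅) ∈ D. (The class [c] is a representative of the fourfold Massey product ⟨x₁, x₂, x₃, x₄⟩, up to sign convention; this is Proposition 3.17 of the paper, expressing fourfold Massey products in terms of the pentagonal Massey tensor.) -/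
/-!
Common constructions: for a `ℚ`-vector space `V`, the symmetric powers
`P²V, P³V, P⁴V, P⁵V` (as `SqM V`, `CubM V`, `QuarM V`, `QuinM V`), built as iterated
quotients of tensor products, with the multiplication maps between them; the exterior
square `Λ²W` (as `AltM W`) with the wedge map; and the 5-linear map `⋆` (as `star5`).
-/

open TensorProduct

noncomputable section

variable (V W : Type) [AddCommGroup V] [Module ℚ V] [AddCommGroup W] [Module ℚ W]

/-- Elements of degree two commute with homogeneous elements. -/
theorem DGA.comm_two (A : DGA) {j : ℕ} {a b : A.carrier} (ha : a ∈ A.grading 2)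
    (hb : b ∈ A.grading j) : b * a = a * b := by
  have h := A.gcomm ha hb
  rw [pow_mul] at h
  simpa using h.symm

/-- Elements of degree three anticommute. -/
theorem DGA.anticomm_three (A : DGA) {a b : A.carrier} (ha : a ∈ A.grading 3)
    (hb : b ∈ A.grading 3) : a * b = - (b * a) := by
  have h := A.gcomm ha hb
  have h9 : ((-1 : ℚ) ^ (3 * 3)) = -1 := by norm_num
  rw [h9] at h
  simpa using h

theorem sqm_comm (V : Type) [AddCommGroup V] [Module ℚ V] (x y : V) :
    sqm V x y = sqm V y x := by
  have h : x ⊗ₜ[ℚ] y - y ⊗ₜ[ℚ] x ∈ sqRel V := Submodule.subset_span ⟨x, y, rfl⟩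
  exact (Submodule.Quotient.eq _).2 h

theorem mulC_swap (V : Type) [AddCommGroup V] [Module ℚ V] (x y w : V) :
    mulC V x (sqm V y w) = mulC V y (sqm V x w) := by
  have h : x ⊗ₜ[ℚ] sqm V y w - y ⊗ₜ[ℚ] sqm V x w ∈ cubRel V :=
    Submodule.subset_span ⟨x, y, w, rfl⟩
  exact (Submodule.Quotient.eq _).2 h

theorem mulC_rot (V : Type) [AddCommGroup V] [Module ℚ V] (x y w : V) :
    mulC V w (sqm V x y) = mulC V x (sqm V y w) := by
  rw [mulC_swap, sqm_comm V w y]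

/-- The differential of `γ` on a product, in terms of `α`. -/
theorem DGA.prod_mem_Z (A : DGA) (a b : A.Z 2) :
    (a : A.carrier) * (b : A.carrier) ∈ A.Z 4 := by
  have ha := a.2
  have hb := b.2
  refine ⟨A.mul_mem ha.1 hb.1, ?_⟩
  have h1 : A.d (a : A.carrier) = 0 := ha.2
  have h2 : A.d (b : A.carrier) = 0 := hb.2
  change A.d _ = 0
  rw [A.leibniz _ ha.1, h1, h2]
  simp

set_option maxHeartbeats 4000000 in
/-- **Proposition 3.17 (fourfold Massey products from `𝒫`).** Let `A` be a DGA over `ℚ`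
with a cochain choice `(α, γ)`, and let `x₁, …, x₅ ∈ H²` satisfy `xᵢx_{i+1} = 0 ∈ H⁴`
for `i ∈ ℤ/5` (so each `xᵢx_{i+1} ∈ E`). Set `αᵢ = α(xᵢ)`, `γ_{i,i+1} = γ(xᵢx_{i+1})`,
and let `σ₁, σ₂ ∈ A⁴` satisfy `dσ₁ = α₁γ₂₃ − γ₁₂α₃`, `dσ₂ = α₂γ₃₄ − γ₂₃α₄`. Then
`c = α₁σ₂ − γ₁₂γ₃₄ + σ₁α₄ ∈ A⁶` is closed, and in `H⁸`,
`[c·α₅] = −[Σ_{i ∈ ℤ/5} αᵢ γ_{i+1,i+2} γ_{i+3,i+4}]`, where the class on the right is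
the evaluation of the map induced by `αγ²` on `⋆(x₁,…,x₅) ∈ D`. -/
theorem massey_product_from_P (A : DGA)
    (cup : SqM (A.H 2) →ₗ[ℚ] A.H 4)
    (hcup : ∀ (x y : A.Z 2) (w : A.Z 4),
      (w : A.carrier) = (x : A.carrier) * (y : A.carrier) →
      cup (sqm (A.H 2) (A.pr 2 x) (A.pr 2 y)) = A.pr 4 w)
    (m : (A.H 2 ⊗[ℚ] AltM (SqM (A.H 2))) →ₗ[ℚ] (CubM (A.H 2) ⊗[ℚ] SqM (A.H 2)))
    (hm : ∀ (q : A.H 2) (u v : SqM (A.H 2)),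
      m (q ⊗ₜ[ℚ] wdg (SqM (A.H 2)) u v)
        = mulC (A.H 2) q u ⊗ₜ[ℚ] v - mulC (A.H 2) q v ⊗ₜ[ℚ] u)
    (ι : (A.H 2 ⊗[ℚ] AltM ↥(LinearMap.ker cup)) →ₗ[ℚ] (A.H 2 ⊗[ℚ] AltM (SqM (A.H 2))))
    (hι : ∀ (q : A.H 2) (e e' : ↥(LinearMap.ker cup)),
      ι (q ⊗ₜ[ℚ] wdg ↥(LinearMap.ker cup) e e')
        = q ⊗ₜ[ℚ] wdg (SqM (A.H 2)) (e : SqM (A.H 2)) (e' : SqM (A.H 2)))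
    (α : A.H 2 →ₗ[ℚ] A.Z 2) (hα : ∀ h, A.pr 2 (α h) = h)
    (αsq : SqM (A.H 2) →ₗ[ℚ] A.Z 4)
    (hαsq : ∀ (x y : A.H 2) (w : A.Z 4),
      (w : A.carrier) = (α x : A.carrier) * (α y : A.carrier) →
      αsq (sqm (A.H 2) x y) = w)
    (γ : ↥(LinearMap.ker cup) →ₗ[ℚ] A.carrier)
    (hγmem : ∀ e, γ e ∈ A.grading 3)
    (hγd : ∀ e : ↥(LinearMap.ker cup), A.d (γ e) = (αsq (e : SqM (A.H 2)) : A.carrier))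
    (Φ : (A.H 2 ⊗[ℚ] AltM ↥(LinearMap.ker cup)) →ₗ[ℚ] A.carrier)
    (hΦ : ∀ (q : A.H 2) (e e' : ↥(LinearMap.ker cup)),
      Φ (q ⊗ₜ[ℚ] wdg ↥(LinearMap.ker cup) e e') = (α q : A.carrier) * (γ e * γ e'))
    -- the classes `x₁, …, x₅` with vanishing consecutive products `xᵢx_{i+1} ∈ E`
    (x₁ x₂ x₃ x₄ x₅ : A.H 2)
    (e₁₂ e₂₃ e₃₄ e₄₅ e₅₁ : ↥(LinearMap.ker cup))
    (he₁₂ : (e₁₂ : SqM (A.H 2)) = sqm (A.H 2) x₁ x₂)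
    (he₂₃ : (e₂₃ : SqM (A.H 2)) = sqm (A.H 2) x₂ x₃)
    (he₃₄ : (e₃₄ : SqM (A.H 2)) = sqm (A.H 2) x₃ x₄)
    (he₄₅ : (e₄₅ : SqM (A.H 2)) = sqm (A.H 2) x₄ x₅)
    (he₅₁ : (e₅₁ : SqM (A.H 2)) = sqm (A.H 2) x₅ x₁)
    (σ₁ σ₂ : A.carrier) (hσ₁mem : σ₁ ∈ A.grading 4) (hσ₂mem : σ₂ ∈ A.grading 4)
    (hσ₁ : A.d σ₁ = (α x₁ : A.carrier) * γ e₂₃ - γ e₁₂ * (α x₃ : A.carrier))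
    (hσ₂ : A.d σ₂ = (α x₂ : A.carrier) * γ e₃₄ - γ e₂₃ * (α x₄ : A.carrier))
    (c : A.carrier)
    (hc : c = (α x₁ : A.carrier) * σ₂ - γ e₁₂ * γ e₃₄ + σ₁ * (α x₄ : A.carrier))
    (S : A.carrier)
    (hS : S = (α x₁ : A.carrier) * (γ e₂₃ * γ e₄₅)
        + (α x₂ : A.carrier) * (γ e₃₄ * γ e₅₁)
        + (α x₃ : A.carrier) * (γ e₄₅ * γ e₁₂)
        + (α x₄ : A.carrier) * (γ e₅₁ * γ e₂₃)
        + (α x₅ : A.carrier) * (γ e₁₂ * γ e₃₄))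
    (st : A.H 2 ⊗[ℚ] AltM ↥(LinearMap.ker cup))
    (hst : st = x₁ ⊗ₜ[ℚ] wdg ↥(LinearMap.ker cup) e₂₃ e₄₅
        + x₂ ⊗ₜ[ℚ] wdg ↥(LinearMap.ker cup) e₃₄ e₅₁
        + x₃ ⊗ₜ[ℚ] wdg ↥(LinearMap.ker cup) e₄₅ e₁₂
        + x₄ ⊗ₜ[ℚ] wdg ↥(LinearMap.ker cup) e₅₁ e₂₃
        + x₅ ⊗ₜ[ℚ] wdg ↥(LinearMap.ker cup) e₁₂ e₃₄) :
    c ∈ A.grading 6 ∧ A.d c = 0 ∧ m (ι st) = 0 ∧ Φ st = S ∧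
      c * (α x₅ : A.carrier) + S ∈ Submodule.map A.d (A.grading 7) := by
  have hdγ : ∀ (x y : A.H 2) (e : ↥(LinearMap.ker cup)),
      (e : SqM (A.H 2)) = sqm (A.H 2) x y →
      A.d (γ e) = (α x : A.carrier) * (α y : A.carrier) := by
    intro x y e he
    rw [hγd, he, hαsq x y ⟨_, A.prod_mem_Z (α x) (α y)⟩ rfl]
  have d12 := hdγ _ _ _ he₁₂
  have d34 := hdγ _ _ _ he₃₄
  have d45 := hdγ _ _ _ he₄₅
  have d51 := hdγ _ _ _ he₅₁
  have hst0 : m (ι st) = 0 := by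
    rw [hst]
    simp only [map_add, hι, hm, he₁₂, he₂₃, he₃₄, he₄₅, he₅₁]
    rw [mulC_rot (A.H 2) x₁ x₂ x₃, mulC_rot (A.H 2) x₂ x₃ x₄, mulC_rot (A.H 2) x₃ x₄ x₅,
      mulC_rot (A.H 2) x₄ x₅ x₁, mulC_rot (A.H 2) x₅ x₁ x₂]
    abel
  have hΦS : Φ st = S := by
    rw [hst, hS]
    simp only [map_add, hΦ]
  have amem : ∀ x, (α x : A.carrier) ∈ A.grading 2 := fun x => (α x).2.1
  have ad : ∀ x, A.d (α x : A.carrier) = 0 := fun x => (α x).2.2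
  have cga : ∀ e x, γ e * (α x : A.carrier) = (α x : A.carrier) * γ e :=
    fun e x => A.comm_two (amem x) (hγmem e)
  have cs1 : ∀ x, σ₁ * (α x : A.carrier) = (α x : A.carrier) * σ₁ :=
    fun x => A.comm_two (amem x) hσ₁mem
  have cs2 : ∀ x, σ₂ * (α x : A.carrier) = (α x : A.carrier) * σ₂ :=
    fun x => A.comm_two (amem x) hσ₂mem
  have caa : ∀ x y, (α x : A.carrier) * (α y : A.carrier) = (α y : A.carrier) * (α x : A.carrier) :=
    fun x y => A.comm_two (amem y) (amem x)
  have cga' : ∀ e x z, γ e * ((α x : A.carrier) * z) = (α x : A.carrier) * (γ e * z) :=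
    fun e x z => by rw [← mul_assoc, cga, mul_assoc]
  have cgg : ∀ e e', γ e * γ e' = - (γ e' * γ e) :=
    fun e e' => A.anticomm_three (hγmem e) (hγmem e')
  have l2 : ∀ x b, A.d ((α x : A.carrier) * b) = (α x : A.carrier) * A.d b := by
    intro x b
    rw [A.leibniz b (amem x), ad]
    simp
  have l3 : ∀ e b, A.d (γ e * b) = A.d (γ e) * b - γ e * A.d b := by
    intro e b
    have h3 : ((-1 : ℚ) ^ 3) = -1 := by norm_num
    rw [A.leibniz b (hγmem e), h3, neg_one_smul, sub_eq_add_neg]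
  have l4 : ∀ b, A.d (σ₁ * b) = A.d σ₁ * b + σ₁ * A.d b := by
    intro b
    have h4 : ((-1 : ℚ) ^ 4) = 1 := by norm_num
    rw [A.leibniz b hσ₁mem, h4, one_smul]
  refine ⟨?_, ?_, hst0, hΦS, ?_⟩
  · rw [hc]
    exact add_mem (sub_mem (A.mul_mem (amem _) hσ₂mem) (A.mul_mem (hγmem _) (hγmem _)))
      (A.mul_mem hσ₁mem (amem _))
  · rw [hc, map_add, map_sub, l2, l3, l4, hσ₁, hσ₂, d12, d34, ad]
    simp only [mul_sub, sub_mul, mul_assoc, mul_zero, add_zero, cga, cga']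
    abel
  · refine ⟨γ e₅₁ * σ₂ + σ₁ * γ e₄₅,
      add_mem (A.mul_mem (hγmem _) hσ₂mem) (A.mul_mem hσ₁mem (hγmem _)), ?_⟩
    rw [map_add, l3, l4, hσ₁, hσ₂, d51, d45, hc, hS, caa x₅ x₁]
    have s1 : σ₁ * ((α x₄ : A.carrier) * (α x₅ : A.carrier))
        = σ₁ * (α x₄ : A.carrier) * (α x₅ : A.carrier) := (mul_assoc _ _ _).symm
    rw [s1, cgg e₃₄ e₅₁, cgg e₄₅ e₁₂]
    simp only [mul_sub, sub_mul, add_mul, mul_assoc, mul_neg, cga, cga', cs2]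
    abel
end
end
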